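/- arXiv:2202.06659 — 2 statements merged into one kernel-verified Lean document; each statement's English description precedes it below -/
import Mathlib

section
/- Let (D_n)_{n∈ℕ} and D_∞ be nonempty compact convex subsets of ℝ³ such that 0 ∈ D_n for every n, 0 lies in the relative interior of D_∞ (its interior within its affine span), the Hausdorff distance d_H(D_n, D_∞) tends to 0, and for every n the dimension of the linear span of D_∞ is at most the dimension of the linear span of D_n. Then there exists a sequence (φ_n) of orthogonal linear maps of ℝ³ converging to the identity (in operator norm) such that φ_n⁻¹(span(D_∞)) ⊆ span(D_n) for every n. -/
open Filter Topology

/-!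
Gram–Schmidt orthonormalization is continuous at every orthonormal basis. Take an orthonormal basis
of the whole space whose initial segment spans `span D_∞`, project that segment to `span (D n)`,
keep the other vectors and orthonormalize: the new bases converge to the old one, so the orthogonal
maps carrying the new bases to the old one converge to the identity. The projections converge to the
identity on `span D_∞` because the projection of a point to `span (D n)` is at least as close to it
as `D n` is. For the remaining indices, at which the perturbed basis may be linearly dependent, the
dimension inequality provides an orthogonal map whose inverse carries `span D_∞` into `span (D n)`.
-/

open InnerProductSpace Metric Module Set Submodule

section GramSchmidt

variable {𝕜 E ι : Type*} [RCLike 𝕜] [NormedAddCommGroup E] [InnerProductSpace 𝕜 E]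
  [LinearOrder ι] [LocallyFiniteOrderBot ι] [WellFoundedLT ι]

theorem continuousAt_gramSchmidt {v : ι → E} (hv : LinearIndependent 𝕜 v) (i : ι) :
    ContinuousAt (fun f : ι → E => gramSchmidt 𝕜 f i) v := by
  induction i using WellFoundedLT.induction with
  | ind i ih =>
    have gramSchmidt_eq (f : ι → E) : gramSchmidt 𝕜 f i = f i - ∑ j ∈ Finset.Iio i,
        (inner 𝕜 (gramSchmidt 𝕜 f j) (f i) / (‖gramSchmidt 𝕜 f j‖ : 𝕜) ^ 2) •
          gramSchmidt 𝕜 f j :=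
      eq_sub_of_add_eq (gramSchmidt_def'' 𝕜 f i).symm
    simp only [gramSchmidt_eq]
    have eval_continuousAt : ContinuousAt (fun f : ι → E => f i) v := continuousAt_apply i v
    refine eval_continuousAt.sub (tendsto_finsetSum _ fun j hj => ?_)
    have ih_j := ih j (Finset.mem_Iio.1 hj)
    have norm_ne_zero : (‖gramSchmidt 𝕜 v j‖ : 𝕜) ^ 2 ≠ 0 := by
      simpa using gramSchmidt_ne_zero j hv
    exact ((ih_j.inner eval_continuousAt).div
      ((RCLike.continuous_ofReal.continuousAt.comp ih_j.norm).pow 2) norm_ne_zero).smul ih_j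

theorem continuousAt_gramSchmidtNormed {v : ι → E} (hv : LinearIndependent 𝕜 v) (i : ι) :
    ContinuousAt (fun f : ι → E => gramSchmidtNormed 𝕜 f i) v := by
  have hi := continuousAt_gramSchmidt hv i
  have norm_ne_zero : (‖gramSchmidt 𝕜 v i‖ : 𝕜) ≠ 0 := by simpa using gramSchmidt_ne_zero i hv
  exact ((RCLike.continuous_ofReal.continuousAt.comp hi.norm).inv₀ norm_ne_zero).smul hi

theorem eventually_gramSchmidtNormed_ne_zero {v : ι → E} (hv : LinearIndependent 𝕜 v) (i : ι) :
    ∀ᶠ f in 𝓝 v, gramSchmidtNormed 𝕜 f i ≠ 0 :=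
  (continuousAt_gramSchmidtNormed hv i).eventually_ne
    ((gramSchmidtNormed_linearIndependent hv).ne_zero i)

theorem gramSchmidtNormed_mem_span (f : ι → E) (i : ι) :
    gramSchmidtNormed 𝕜 f i ∈ span 𝕜 (f '' Iic i) :=
  smul_mem _ _ (gramSchmidt_mem_span 𝕜 f le_rfl)

variable [Fintype ι] [FiniteDimensional 𝕜 E]

theorem tendsto_gramSchmidtOrthonormalBasis (h : finrank 𝕜 E = Fintype.card ι)
    (b : OrthonormalBasis ι 𝕜 E) (i : ι) :
    Tendsto (fun f => gramSchmidtOrthonormalBasis h f i) (𝓝 b) (𝓝 (b i)) := by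
  have hb : LinearIndependent 𝕜 b := b.orthonormal.linearIndependent
  have gramSchmidtNormed_self : gramSchmidtNormed 𝕜 b i = b i := by
    simp [gramSchmidtNormed, gramSchmidt_of_orthogonal 𝕜 b.orthonormal.2]
  have tendsto_normed := (continuousAt_gramSchmidtNormed hb i).tendsto
  rw [gramSchmidtNormed_self] at tendsto_normed
  refine tendsto_normed.congr' ?_
  filter_upwards [eventually_gramSchmidtNormed_ne_zero hb i] with f hf
  exact (gramSchmidtOrthonormalBasis_apply h hf).symm

theorem eventually_gramSchmidtOrthonormalBasis_mem_span (h : finrank 𝕜 E = Fintype.card ι)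
    {v : ι → E} (hv : LinearIndependent 𝕜 v) (i : ι) :
    ∀ᶠ f in 𝓝 v, gramSchmidtOrthonormalBasis h f i ∈ span 𝕜 (f '' Iic i) := by
  filter_upwards [eventually_gramSchmidtNormed_ne_zero hv i] with f hf
  rw [gramSchmidtOrthonormalBasis_apply h hf]
  exact gramSchmidtNormed_mem_span f i

end GramSchmidt

section OrthonormalBasis

variable {𝕜 E ι : Type*} [RCLike 𝕜] [NormedAddCommGroup E] [InnerProductSpace 𝕜 E] [Fintype ι]

theorem norm_equiv_sub_id_le (b c : OrthonormalBasis ι 𝕜 E) :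
    ‖(c.equiv b (Equiv.refl ι)).toLinearIsometry.toContinuousLinearMap -
      ContinuousLinearMap.id 𝕜 E‖ ≤ ∑ i, ‖c i - b i‖ := by
  refine ContinuousLinearMap.opNorm_le_bound _ (by positivity) fun x => ?_
  have expansion : c.equiv b (Equiv.refl ι) x - x = ∑ i, inner 𝕜 (c i - b i) x • b i := by
    simp only [inner_sub_left, sub_smul, Finset.sum_sub_distrib, b.sum_repr',
      OrthonormalBasis.equiv_apply, OrthonormalBasis.repr_apply_apply, Equiv.refl_apply]
  calc ‖c.equiv b (Equiv.refl ι) x - x‖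
      = ‖∑ i, inner 𝕜 (c i - b i) x • b i‖ := by rw [expansion]
    _ ≤ ∑ i, ‖inner 𝕜 (c i - b i) x • b i‖ := norm_sum_le _ _
    _ = ∑ i, ‖inner 𝕜 (c i - b i) x‖ := by simp only [norm_smul, b.norm_eq_one, mul_one]
    _ ≤ ∑ i, ‖c i - b i‖ * ‖x‖ := by gcongr; exact norm_inner_le_norm _ _
    _ = (∑ i, ‖c i - b i‖) * ‖x‖ := (Finset.sum_mul ..).symm

theorem tendsto_norm_equiv_sub_id {α : Type*} {l : Filter α} {b : OrthonormalBasis ι 𝕜 E}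
    {c : α → OrthonormalBasis ι 𝕜 E} (hc : ∀ i, Tendsto (fun a => c a i) l (𝓝 (b i))) :
    Tendsto (fun a => ‖((c a).equiv b (Equiv.refl ι)).toLinearIsometry.toContinuousLinearMap -
      ContinuousLinearMap.id 𝕜 E‖) l (𝓝 0) := by
  refine squeeze_zero (fun _ => norm_nonneg _) (fun a => norm_equiv_sub_id_le b (c a)) ?_
  simpa using tendsto_finsetSum Finset.univ fun i _ => tendsto_iff_norm_sub_tendsto_zero.1 (hc i)

theorem mapsTo_equiv_symm_of_span_image_eq {b c : OrthonormalBasis ι 𝕜 E} {s : Set ι}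
    {V W : Submodule 𝕜 E} (hb : span 𝕜 (b '' s) = V) (hc : ∀ i ∈ s, c i ∈ W) :
    MapsTo (c.equiv b (Equiv.refl ι)).symm V W := by
  suffices V ≤ W.comap (c.equiv b (Equiv.refl ι)).symm.toLinearEquiv.toLinearMap from this
  rw [← hb, span_le]
  rintro _ ⟨i, hi, rfl⟩
  simpa using hc i hi

theorem exists_orthonormalBasis_span_image_eq [FiniteDimensional 𝕜 E] (V : Submodule 𝕜 E) :
    ∃ b : OrthonormalBasis (Fin (finrank 𝕜 E)) 𝕜 E,
      span 𝕜 (b '' {i | (i : ℕ) < finrank 𝕜 V}) = V := by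
  let e : Fin (finrank 𝕜 V) → Fin (finrank 𝕜 E) := Fin.castLE V.finrank_le
  have e_injective : Function.Injective e := Fin.castLE_injective V.finrank_le
  let u : Fin (finrank 𝕜 V) → E := fun j => stdOrthonormalBasis 𝕜 V j
  have u_orthonormal : Orthonormal 𝕜 u :=
    (stdOrthonormalBasis 𝕜 V).orthonormal.comp_linearIsometry V.subtypeₗᵢ
  have u_span : span 𝕜 (range u) = V := calc
    span 𝕜 (range u) = (span 𝕜 (range (stdOrthonormalBasis 𝕜 V))).map V.subtype := by
      rw [map_span, ← range_comp]
      rfl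
    _ = V := by
      rw [← OrthonormalBasis.coe_toBasis, Basis.span_eq, map_subtype_top]
  have extend_orthonormal : Orthonormal 𝕜 ((range e).domRestrict (Function.extend e u 0)) := by
    have domRestrict_eq : (range e).domRestrict (Function.extend e u 0) =
        u ∘ (Equiv.ofInjective e e_injective).symm := by
      rw [Equiv.eq_comp_symm]
      exact funext (e_injective.extend_apply u 0)
    rw [domRestrict_eq]
    exact u_orthonormal.comp _ (Equiv.injective _)
  obtain ⟨b, hb⟩ := extend_orthonormal.exists_orthonormalBasis_extension_of_card_eq (by simp)
  have b_comp_e : b ∘ e = u := by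
    funext j
    rw [Function.comp_apply, hb _ (mem_range_self j), e_injective.extend_apply]
  refine ⟨b, ?_⟩
  rw [← Fin.range_castLE V.finrank_le, ← range_comp, b_comp_e, u_span]

end OrthonormalBasis

section Subspaces

variable {𝕜 E α : Type*} [RCLike 𝕜] [NormedAddCommGroup E] [InnerProductSpace 𝕜 E]

theorem edist_starProjection_le_infEDist (U : Submodule 𝕜 E) [U.HasOrthogonalProjection]
    {s : Set E} (hs : s ⊆ U) (x : E) : edist x (U.starProjection x) ≤ infEDist x s := by
  refine le_infEDist.2 fun y hy => ?_
  rw [edist_dist, edist_dist, dist_eq_norm, dist_eq_norm, starProjection_minimal]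
  have bddBelow : BddBelow (range fun w : U => ‖x - w‖) := ⟨0, by rintro _ ⟨w, rfl⟩; positivity⟩
  exact ENNReal.ofReal_le_ofReal (ciInf_le bddBelow ⟨y, hs hy⟩)

theorem tendsto_starProjection_of_mem_span {l : Filter α} {s : α → Set E} {t : Set E}
    {U : α → Submodule 𝕜 E} [∀ a, (U a).HasOrthogonalProjection] (hsU : ∀ a, s a ⊆ U a)
    (hst : ∀ x ∈ t, Tendsto (fun a => infEDist x (s a)) l (𝓝 0)) {x : E} (hx : x ∈ span 𝕜 t) :
    Tendsto (fun a => (U a).starProjection x) l (𝓝 x) := by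
  induction hx using span_induction with
  | mem x hx =>
    rw [tendsto_iff_edist_tendsto_0]
    refine tendsto_of_tendsto_of_tendsto_of_le_of_le tendsto_const_nhds (hst x hx)
      (fun _ => zero_le) fun a => ?_
    rw [edist_comm]
    exact edist_starProjection_le_infEDist (U a) (hsU a) x
  | zero => simpa using tendsto_const_nhds
  | add x y _ _ hx hy => simpa using hx.add hy
  | smul r x _ hx => simpa using hx.const_smul r

variable [FiniteDimensional 𝕜 E]

theorem exists_linearIsometryEquiv_mapsTo_symm {V W : Submodule 𝕜 E}
    (hVW : finrank 𝕜 V ≤ finrank 𝕜 W) : ∃ φ : E ≃ₗᵢ[𝕜] E, MapsTo φ.symm V W := by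
  obtain ⟨b, hb⟩ := exists_orthonormalBasis_span_image_eq V
  obtain ⟨c, hc⟩ := exists_orthonormalBasis_span_image_eq W
  refine ⟨c.equiv b (Equiv.refl _), mapsTo_equiv_symm_of_span_image_eq hb fun i hi => ?_⟩
  exact hc ▸ subset_span (mem_image_of_mem c (lt_of_lt_of_le hi hVW))

theorem exists_tendsto_id_eventually_mapsTo_symm_map {l : Filter α} (V : Submodule 𝕜 E)
    {T : α → E →ₗ[𝕜] E} (hT : ∀ x, Tendsto (fun a => T a x) l (𝓝 x)) :
    ∃ φ : α → E ≃ₗᵢ[𝕜] E,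
      Tendsto (fun a => ‖(φ a).toLinearIsometry.toContinuousLinearMap -
        ContinuousLinearMap.id 𝕜 E‖) l (𝓝 0) ∧
      ∀ᶠ a in l, MapsTo (φ a).symm V (V.map (T a)) := by
  obtain ⟨b, hb⟩ := exists_orthonormalBasis_span_image_eq V
  have card_eq : finrank 𝕜 E = Fintype.card (Fin (finrank 𝕜 E)) := by simp
  have tendsto_frame : Tendsto (fun a => T a ∘ b) l (𝓝 b) := tendsto_pi_nhds.2 fun i => hT (b i)
  let c a := gramSchmidtOrthonormalBasis card_eq (T a ∘ b)
  refine ⟨fun a => (c a).equiv b (Equiv.refl _), tendsto_norm_equiv_sub_id fun i =>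
    (tendsto_gramSchmidtOrthonormalBasis card_eq b i).comp tendsto_frame, ?_⟩
  have c_mem_span : ∀ᶠ a in l, ∀ i, c a i ∈ span 𝕜 ((T a ∘ b) '' Iic i) :=
    eventually_all.2 fun i => tendsto_frame.eventually
      (eventually_gramSchmidtOrthonormalBasis_mem_span card_eq b.orthonormal.linearIndependent i)
  filter_upwards [c_mem_span] with a ha
  refine mapsTo_equiv_symm_of_span_image_eq hb fun i hi => ?_
  have Iic_subset : Iic i ⊆ {j | (j : ℕ) < finrank 𝕜 V} := fun _ hj =>
    (Fin.le_def.1 hj).trans_lt hi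
  rw [← hb, map_span, ← image_comp]
  exact span_mono (image_mono Iic_subset) (ha i)

theorem exists_tendsto_id_eventually_mapsTo_symm {l : Filter α} {V : Submodule 𝕜 E}
    {W : α → Submodule 𝕜 E}
    (hVW : ∀ x ∈ V, Tendsto (fun a => (W a).starProjection x) l (𝓝 x)) :
    ∃ φ : α → E ≃ₗᵢ[𝕜] E,
      Tendsto (fun a => ‖(φ a).toLinearIsometry.toContinuousLinearMap -
        ContinuousLinearMap.id 𝕜 E‖) l (𝓝 0) ∧
      ∀ᶠ a in l, MapsTo (φ a).symm V (W a) := by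
  let T a : E →ₗ[𝕜] E := ((W a).starProjection ∘L V.starProjection + Vᗮ.starProjection : E →L[𝕜] E)
  have T_tendsto (x : E) : Tendsto (fun a => T a x) l (𝓝 x) := by
    have := (hVW _ (V.starProjection_apply_mem x)).add_const (Vᗮ.starProjection x)
    rwa [starProjection_add_starProjection_orthogonal] at this
  have map_T_le (a : α) : V.map (T a) ≤ W a := by
    rintro _ ⟨x, hx, rfl⟩
    simp [T, starProjection_eq_self_iff.2 hx, starProjection_orthogonal_apply_eq_zero hx]
  obtain ⟨φ, φ_tendsto, hφ⟩ := exists_tendsto_id_eventually_mapsTo_symm_map V T_tendsto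
  exact ⟨φ, φ_tendsto, hφ.mono fun a ha => ha.mono_right (map_T_le a)⟩

theorem exists_tendsto_id_forall_mapsTo_symm {l : Filter α} {V : Submodule 𝕜 E}
    {W : α → Submodule 𝕜 E}
    (hVW : ∀ x ∈ V, Tendsto (fun a => (W a).starProjection x) l (𝓝 x))
    (hdim : ∀ a, finrank 𝕜 V ≤ finrank 𝕜 (W a)) :
    ∃ φ : α → E ≃ₗᵢ[𝕜] E,
      Tendsto (fun a => ‖(φ a).toLinearIsometry.toContinuousLinearMap -
        ContinuousLinearMap.id 𝕜 E‖) l (𝓝 0) ∧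
      ∀ a, MapsTo (φ a).symm V (W a) := by
  classical
  obtain ⟨φ, φ_tendsto, hφ⟩ := exists_tendsto_id_eventually_mapsTo_symm hVW
  choose ψ hψ using fun a => exists_linearIsometryEquiv_mapsTo_symm (hdim a)
  refine ⟨fun a => if MapsTo (φ a).symm V (W a) then φ a else ψ a, φ_tendsto.congr' ?_,
    fun a => ?_⟩
  · filter_upwards [hφ] with a ha
    rw [if_pos ha]
  · dsimp only
    split_ifs with ha
    exacts [ha, hψ a]

end Subspaces

theorem tendsto_infEDist_of_tendsto_hausdorffDist {X α : Type*} [PseudoMetricSpace X]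
    {l : Filter α} {s : α → Set X} {t : Set X} (hfin : ∀ a, hausdorffEDist (s a) t ≠ ⊤)
    (hst : Tendsto (fun a => hausdorffDist (s a) t) l (𝓝 0)) {x : X} (hx : x ∈ t) :
    Tendsto (fun a => infEDist x (s a)) l (𝓝 0) := by
  have tendsto_hausdorffEDist : Tendsto (fun a => hausdorffEDist (s a) t) l (𝓝 0) :=
    (ENNReal.tendsto_toReal_zero_iff hfin).1 hst
  refine tendsto_of_tendsto_of_tendsto_of_le_of_le tendsto_const_nhds tendsto_hausdorffEDist
    (fun _ => zero_le) fun a => ?_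
  rw [hausdorffEDist_comm]
  exact infEDist_le_hausdorffEDist_of_mem hx

theorem stmt_0_general {𝕜 E α : Type*} [RCLike 𝕜] [NormedAddCommGroup E] [InnerProductSpace 𝕜 E]
    [FiniteDimensional 𝕜 E] {l : Filter α} {s : α → Set E} {t : Set E}
    (hst : ∀ x ∈ t, Tendsto (fun a => infEDist x (s a)) l (𝓝 0))
    (hdim : ∀ a, finrank 𝕜 (span 𝕜 t) ≤ finrank 𝕜 (span 𝕜 (s a))) :
    ∃ φ : α → E ≃ₗᵢ[𝕜] E,
      Tendsto (fun a => ‖(φ a).toLinearIsometry.toContinuousLinearMap -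
        ContinuousLinearMap.id 𝕜 E‖) l (𝓝 0) ∧
      ∀ a, ∀ x ∈ span 𝕜 t, (φ a).symm x ∈ span 𝕜 (s a) :=
  exists_tendsto_id_forall_mapsTo_symm
    (fun _ => tendsto_starProjection_of_mem_span (fun _ => subset_span) hst) hdim

/-- Let `(D_n)` and `D_∞` be nonempty compact convex subsets of `ℝ³` with
`0 ∈ D_n` for every `n`, `0` in the relative interior of `D_∞`, `d_H(D_n, D_∞) → 0`, and
`dim span(D_∞) ≤ dim span(D_n)` for every `n`. Then there exist orthogonal linear maps
`φ_n` of `ℝ³` converging to the identity in operator norm with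
`φ_n⁻¹(span D_∞) ⊆ span (D_n)` for every `n`. -/
theorem stmt_0 (D : ℕ → Set (EuclideanSpace ℝ (Fin 3)))
    (D_inf : Set (EuclideanSpace ℝ (Fin 3)))
    (hDc : ∀ n, IsCompact (D n)) (hDconv : ∀ n, Convex ℝ (D n)) (hDne : ∀ n, (D n).Nonempty)
    (hIc : IsCompact D_inf) (hIconv : Convex ℝ D_inf) (hIne : D_inf.Nonempty)
    (h0 : ∀ n, (0 : EuclideanSpace ℝ (Fin 3)) ∈ D n)
    (h0I : (0 : EuclideanSpace ℝ (Fin 3)) ∈ intrinsicInterior ℝ D_inf)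
    (hH : Tendsto (fun n => Metric.hausdorffDist (D n) D_inf) atTop (𝓝 0))
    (hdim : ∀ n, Module.finrank ℝ (Submodule.span ℝ D_inf) ≤
      Module.finrank ℝ (Submodule.span ℝ (D n))) :
    ∃ φ : ℕ → (EuclideanSpace ℝ (Fin 3) ≃ₗᵢ[ℝ] EuclideanSpace ℝ (Fin 3)),
      Tendsto (fun n => ‖(φ n).toLinearIsometry.toContinuousLinearMap -
        ContinuousLinearMap.id ℝ (EuclideanSpace ℝ (Fin 3))‖) atTop (𝓝 0) ∧
      ∀ n, ∀ x ∈ Submodule.span ℝ D_inf, (φ n).symm x ∈ Submodule.span ℝ (D n) := by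
  have hfin (n : ℕ) : hausdorffEDist (D n) D_inf ≠ ⊤ :=
    hausdorffEDist_ne_top_of_nonempty_of_bounded (hDne n) hIne (hDc n).isBounded hIc.isBounded
  exact stmt_0_general (fun _ => tendsto_infEDist_of_tendsto_hausdorffDist hfin hH) hdim
end

section
/- Let L and L′ be nonempty compact convex subsets of ℝ³ of dimension 1 (i.e. their linear spans are 1-dimensional) with 0 ∈ L and 0 ∈ L′, and let ε ∈ (0,1) be such that (1−ε)•L ⊆ L′ ⊆ (1+ε)•L and (1−ε)•L′ ⊆ L ⊆ (1+ε)•L′. Then the Gromov–Hausdorff distance between the metric spaces L and L′ (each endowed with the metric induced from the Euclidean distance of ℝ³) is at most 2·(diam(L) + diam(L′))·ε. -/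
open Pointwise

section OneSubSMul

variable {𝕜 E : Type*} [NormedField 𝕜] [SeminormedAddCommGroup E] [NormedSpace 𝕜 E]

theorem dist_one_sub_smul_right (ε : 𝕜) (x : E) : dist x ((1 - ε) • x) = ‖ε‖ * ‖x‖ := by
  rw [dist_eq_norm, sub_smul, one_smul, sub_sub_cancel, norm_smul]

variable {s t : Set E} {ε : 𝕜}

theorem dist_one_sub_smul_right_le_diam (hs : Bornology.IsBounded s) (h0 : (0 : E) ∈ s) {x : E}
    (hx : x ∈ s) : dist x ((1 - ε) • x) ≤ Metric.diam s * ‖ε‖ := by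
  have norm_le_diam : ‖x‖ ≤ Metric.diam s := by
    simpa only [dist_zero_right] using Metric.dist_le_diam_of_mem hs hx h0
  rw [dist_one_sub_smul_right, mul_comm]
  gcongr

theorem hausdorffDist_le_of_one_sub_smul_subset (hs : Bornology.IsBounded s)
    (ht : Bornology.IsBounded t) (h0 : (0 : E) ∈ s)
    (hst : (1 - ε) • s ⊆ t) (hts : (1 - ε) • t ⊆ s) :
    Metric.hausdorffDist s t ≤ max (Metric.diam s) (Metric.diam t) * ‖ε‖ := by
  have h0t : (0 : E) ∈ t := hst (Set.zero_mem_smul_set h0)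
  refine Metric.hausdorffDist_le_of_mem_dist
    (mul_nonneg (le_max_of_le_left Metric.diam_nonneg) (norm_nonneg ε))
    (fun x hx ↦ ⟨(1 - ε) • x, hst (Set.smul_mem_smul_set hx), ?_⟩)
    (fun y hy ↦ ⟨(1 - ε) • y, hts (Set.smul_mem_smul_set hy), ?_⟩)
  · exact (dist_one_sub_smul_right_le_diam hs h0 hx).trans (by gcongr; exact le_max_left _ _)
  · exact (dist_one_sub_smul_right_le_diam ht h0t hy).trans (by gcongr; exact le_max_right _ _)

end OneSubSMul

theorem ghDist_coe_le_hausdorffDist {X : Type*} [MetricSpace X] (s t : Set X)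
    [Nonempty s] [Nonempty t] [CompactSpace s] [CompactSpace t] :
    GromovHausdorff.ghDist s t ≤ Metric.hausdorffDist s t := by
  simpa only [Subtype.range_coe] using
    GromovHausdorff.ghDist_le_hausdorffDist (isometry_subtype_coe (s := s))
      (isometry_subtype_coe (s := t))

theorem stmt_10_general {𝕜 E : Type*} [NormedField 𝕜] [NormedAddCommGroup E] [NormedSpace 𝕜 E]
    {L L' : Set E} [Nonempty L] [Nonempty L'] [CompactSpace L] [CompactSpace L'] {ε : 𝕜}
    (h0 : (0 : E) ∈ L) (h : (1 - ε) • L ⊆ L') (h' : (1 - ε) • L' ⊆ L) :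
    GromovHausdorff.ghDist L L' ≤ max (Metric.diam L) (Metric.diam L') * ‖ε‖ :=
  (ghDist_coe_le_hausdorffDist L L').trans <|
    hausdorffDist_le_of_one_sub_smul_subset (isCompact_iff_compactSpace.mpr ‹_›).isBounded
      (isCompact_iff_compactSpace.mpr ‹_›).isBounded h0 h h'

/-- Let `L, L'` be nonempty compact convex 1-dimensional subsets of `ℝ³`
containing `0`, and let `ε ∈ (0,1)` with `(1−ε)•L ⊆ L' ⊆ (1+ε)•L` and
`(1−ε)•L' ⊆ L ⊆ (1+ε)•L'`. Then the Gromov–Hausdorff distance between `L` and `L'` (with their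
induced Euclidean metrics) is at most `2·(diam L + diam L')·ε`. -/
theorem stmt_10 (L L' : Set (EuclideanSpace ℝ (Fin 3)))
    (hLc : IsCompact L) (hLconv : Convex ℝ L) (hLne : L.Nonempty)
    (hL'c : IsCompact L') (hL'conv : Convex ℝ L') (hL'ne : L'.Nonempty)
    (hLdim : Module.finrank ℝ (Submodule.span ℝ L) = 1)
    (hL'dim : Module.finrank ℝ (Submodule.span ℝ L') = 1)
    (h0L : (0 : EuclideanSpace ℝ (Fin 3)) ∈ L)
    (h0L' : (0 : EuclideanSpace ℝ (Fin 3)) ∈ L')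
    (ε : ℝ) (hε : ε ∈ Set.Ioo (0:ℝ) 1)
    (h₁ : (1 - ε) • L ⊆ L') (h₂ : L' ⊆ (1 + ε) • L)
    (h₃ : (1 - ε) • L' ⊆ L) (h₄ : L ⊆ (1 + ε) • L') :
    haveI : Nonempty L := hLne.to_subtype
    haveI : Nonempty L' := hL'ne.to_subtype
    haveI : CompactSpace L := isCompact_iff_compactSpace.mp hLc
    haveI : CompactSpace L' := isCompact_iff_compactSpace.mp hL'c
    GromovHausdorff.ghDist L L' ≤ 2 * (Metric.diam L + Metric.diam L') * ε := by
  have := hLne.to_subtype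
  have := hL'ne.to_subtype
  have := isCompact_iff_compactSpace.mp hLc
  have := isCompact_iff_compactSpace.mp hL'c
  have hd : 0 ≤ Metric.diam L := Metric.diam_nonneg
  have hd' : 0 ≤ Metric.diam L' := Metric.diam_nonneg
  calc
    GromovHausdorff.ghDist L L' ≤ max (Metric.diam L) (Metric.diam L') * ‖ε‖ :=
      stmt_10_general h0L h₁ h₃
    _ ≤ 2 * (Metric.diam L + Metric.diam L') * ε := by
      rw [Real.norm_of_nonneg hε.1.le]
      exact mul_le_mul_of_nonneg_right (max_le (by linarith) (by linarith)) hε.1.le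
end
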